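/- arXiv:math/9903052 — 2 statements merged into one kernel-verified Lean document; each statement's English description precedes it below -/
import Mathlib

section
/- (Classical dynamical Yang–Baxter equation, Etingof–Varchenko.) Each function μ ↦ T_{ab}(μ) is differentiable on the open set {μ ∈ 𝔤 : ‖ad_μ‖ < 2π}, and for every μ in this set and all indices a,b,c one has Σ_{cyclic} [ D_μT_{bc}(e_a) + Σ_{r,s} T_{ar}(μ) f_{rbs} T_{sc}(μ) ] = (1/4) f_{abc}, where D_μT_{bc}(e_a) denotes the directional derivative of T_{bc} at μ in the direction e_a, and the sum Σ_{cyclic} runs over the three cyclic permutations (a,b,c), (b,c,a), (c,a,b) of the index triple. -/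
open scoped RealInnerProductSpace

/-!
Both `T` and its derivative are power series in `ad_μ`. By ad-invariance the operators `x`, `y`, `z`
by which `ad_μ` acts on the three slots of the invariant trilinear form `⟪[a, b], c⟫` satisfy
`x + y + z = 0`, and each degree of the left-hand side is a linear functional applied to the same
degree of a formal power series in `x`, `y`, `z`. The sum of these power series is constant by the
addition theorem `coth u coth v + coth v coth w + coth w coth u = -1` for `u + v + w = 0`.
Convergence for `‖ad_μ‖ < 2π` comes from `|B_{2k}| / (2k)! = 2 ζ(2k) / (2π)^{2k}`.
-/

section Formal

open PowerSeries
open Finset.HasAntidiagonal (antidiagonal)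

/-- The Taylor coefficients at `0` of `1/s - coth(s/2)/2`. -/
noncomputable def cothCoeff (m : ℕ) : ℚ :=
  if Odd m then -(bernoulli (m + 1) / (m + 1).factorial) else 0

lemma cothCoeff_of_odd {m : ℕ} (hm : Odd m) :
    cothCoeff m = -(bernoulli (m + 1) / (m + 1).factorial) :=
  if_pos hm

lemma cothCoeff_of_not_odd {m : ℕ} (hm : ¬Odd m) : cothCoeff m = 0 :=
  if_neg hm

lemma cothCoeff_mul_neg_pow {R : Type*} [Ring R] [Algebra ℚ R] (m : ℕ) (x : R) :
    algebraMap ℚ R (cothCoeff m) * (-x) ^ m = -(algebraMap ℚ R (cothCoeff m) * x ^ m) := by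
  by_cases hm : Odd m
  · rw [hm.neg_pow, mul_neg]
  · simp only [cothCoeff_of_not_odd hm, map_zero, zero_mul, neg_zero]

section CommRing

variable (R : Type*) [CommRing R] [Algebra ℚ R]

/-- The expansion of `1/s - coth(s/2)/2` as a formal power series over a `ℚ`-algebra. -/
noncomputable def cothSeries : R⟦X⟧ :=
  mk fun n => algebraMap ℚ R (cothCoeff n)

@[simp]
lemma coeff_cothSeries (n : ℕ) : coeff n (cothSeries R) = algebraMap ℚ R (cothCoeff n) :=
  coeff_mk n _

lemma X_mul_cothSeries :
    X * cothSeries R = 1 - C (algebraMap ℚ R (1 / 2)) * X - bernoulliPowerSeries R := by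
  ext n
  rcases n with _ | n
  · simp [bernoulliPowerSeries]
  simp only [map_sub, bernoulliPowerSeries, coeff_mk, coeff_cothSeries, coeff_succ_X_mul,
    coeff_succ_mul_X, coeff_one, coeff_C, n.succ_ne_zero, if_false, zero_sub]
  rcases n with _ | n
  · rw [cothCoeff_of_not_odd Nat.not_odd_zero, if_pos rfl, ← map_neg, ← map_sub]
    norm_num
  rw [if_neg n.succ_ne_zero, neg_zero, zero_sub, ← map_neg]
  by_cases hn : Odd (n + 1)
  · rw [cothCoeff_of_odd hn]
  · rw [cothCoeff_of_not_odd hn, bernoulli_eq_zero_of_odd (by grind) (by lia), zero_div, neg_zero]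

lemma two_mul_one_sub_X_mul_cothSeries_mul :
    2 * (1 - X * cothSeries R) * (exp R - 1) = X * (exp R + 1) := by
  have two_mul_half : (2 : R⟦X⟧) * C (algebraMap ℚ R (1 / 2)) = 1 := by
    rw [← map_ofNat C 2, ← map_ofNat (algebraMap ℚ R) 2, ← map_mul, ← map_mul]
    norm_num
  rw [X_mul_cothSeries]
  linear_combination
    2 * bernoulliPowerSeries_mul_exp_sub_one R + X * (exp R - 1) * two_mul_half

variable {R}

lemma two_mul_one_sub_rescale_cothSeries_mul (s : R) :
    2 * (1 - C s * X * rescale s (cothSeries R)) * (rescale s (exp R) - 1) =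
      C s * X * (rescale s (exp R) + 1) := by
  simpa only [map_mul, map_sub, map_add, map_one, map_ofNat, rescale_X] using
    congrArg (rescale s) (two_mul_one_sub_X_mul_cothSeries_mul R)

lemma rescale_neg_cothSeries (s : R) :
    rescale (-s) (cothSeries R) = -rescale s (cothSeries R) := by
  ext n
  simp only [coeff_rescale, coeff_cothSeries, map_neg]
  rw [mul_comm, cothCoeff_mul_neg_pow, mul_comm]

end CommRing

/-- The divided difference `(F(uX) - F(vX)) / (uX - vX)` of a formal power series, with the
quotient carried out coefficientwise so that it makes sense for all `u` and `v`. -/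
noncomputable def dividedDifference {R : Type*} [CommRing R] (F : R⟦X⟧) (u v : R) : R⟦X⟧ :=
  mk fun n => coeff (n + 1) F * ∑ p ∈ antidiagonal n, u ^ p.1 * v ^ p.2

lemma C_sub_mul_X_mul_dividedDifference {R : Type*} [CommRing R] (F : R⟦X⟧) (u v : R) :
    C (u - v) * X * dividedDifference F u v = rescale u F - rescale v F := by
  ext n
  rcases n with _ | n
  · rw [mul_assoc, coeff_C_mul, coeff_zero_X_mul, map_sub, coeff_rescale, coeff_rescale]
    simp
  · have hgeom : (u - v) * ∑ p ∈ antidiagonal n, u ^ p.1 * v ^ p.2 = u ^ (n + 1) - v ^ (n + 1) := by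
      rw [Finset.Nat.sum_antidiagonal_eq_sum_range_succ (fun i j => u ^ i * v ^ j)]
      exact (Commute.all u v).mul_geom_sum₂ (n + 1)
    rw [mul_assoc, coeff_C_mul, coeff_succ_X_mul, dividedDifference, coeff_mk, map_sub,
      coeff_rescale, coeff_rescale]
    linear_combination coeff (n + 1) F * hgeom

/-- The addition theorem `coth u coth v + coth v coth w + coth w coth u = -1` for `u + v + w = 0`,
cleared of denominators: `E = exp (2u)`, `p = a * coth u`, and similarly for `v` and `w`. -/
lemma coth_addition {R : Type*} [CommRing R] [IsDomain R] {a b c p q r E F G : R}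
    (hE : E ≠ 1) (hF : F ≠ 1) (hG : G ≠ 1) (hEFG : E * F * G = 1)
    (hp : p * (E - 1) = a * (E + 1)) (hq : q * (F - 1) = b * (F + 1))
    (hr : r * (G - 1) = c * (G + 1)) :
    c * p * q + a * q * r + b * r * p = -(a * b * c) := by
  have hne : (E - 1) * (F - 1) * (G - 1) ≠ 0 :=
    mul_ne_zero (mul_ne_zero (sub_ne_zero.2 hE) (sub_ne_zero.2 hF)) (sub_ne_zero.2 hG)
  have hpq : p * (E - 1) * (q * (F - 1)) = a * (E + 1) * (b * (F + 1)) := by rw [hp, hq]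
  have hqr : q * (F - 1) * (r * (G - 1)) = b * (F + 1) * (c * (G + 1)) := by rw [hq, hr]
  have hrp : r * (G - 1) * (p * (E - 1)) = c * (G + 1) * (a * (E + 1)) := by rw [hr, hp]
  apply mul_right_cancel₀ hne
  linear_combination c * (G - 1) * hpq + a * (E - 1) * hqr + b * (F - 1) * hrp
    + 4 * a * b * c * hEFG

lemma C_mul_X_ne_zero {R : Type*} [Semiring R] {s : R} (hs : s ≠ 0) : (C s * X : R⟦X⟧) ≠ 0 := by
  intro h
  have h1 := congrArg (coeff (0 + 1)) h
  rw [coeff_succ_mul_X, coeff_zero_C, map_zero] at h1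
  exact hs h1

lemma rescale_exp_ne_one {R : Type*} [CommRing R] [Algebra ℚ R] {s : R} (hs : s ≠ 0) :
    rescale s (exp R) ≠ 1 := by
  intro h
  exact hs (by simpa [coeff_one] using congrArg (coeff 1) h)

/-- The scalar counterpart of the summand `∂T_{bc}/∂μ_a + T_{ar} f_{rbs} T_{sc}`: `x`, `y`, `z`
stand for `ad_μ` acting in the slots `a`, `b`, `c`, which by ad-invariance satisfy
`x + y + z = 0`, and the degree in `X` is the degree in `ad_μ`. -/
noncomputable def cdybeSummand {R : Type*} [CommRing R] [Algebra ℚ R] (x y z : R) : R⟦X⟧ :=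
  dividedDifference (cothSeries R) (-y) z + rescale x (cothSeries R) * rescale z (cothSeries R)

lemma four_mul_cdybeSummand_cyclic {R : Type*} [CommRing R] [IsDomain R] [Algebra ℚ R] {x y z : R}
    (hx : x ≠ 0) (hy : y ≠ 0) (hz : z ≠ 0) (hxyz : x + y + z = 0) :
    4 * (cdybeSummand x y z + cdybeSummand y z x + cdybeSummand z x y) = -1 := by
  have hexp : rescale x (exp R) * rescale y (exp R) * rescale z (exp R) = 1 := by
    rw [exp_mul_exp_eq_exp_add, exp_mul_exp_eq_exp_add, hxyz, rescale_zero_apply,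
      constantCoeff_exp, map_one]
  have hcoth := coth_addition (rescale_exp_ne_one hx) (rescale_exp_ne_one hy)
    (rescale_exp_ne_one hz) hexp (two_mul_one_sub_rescale_cothSeries_mul x)
    (two_mul_one_sub_rescale_cothSeries_mul y) (two_mul_one_sub_rescale_cothSeries_mul z)
  have hdiff : ∀ u v w : R, u + v + w = 0 →
      C u * X * dividedDifference (cothSeries R) (-v) w =
        -(rescale v (cothSeries R) + rescale w (cothSeries R)) := by
    intro u v w huvw
    have h := C_sub_mul_X_mul_dividedDifference (cothSeries R) (-v) w
    rw [rescale_neg_cothSeries, show -v - w = u by linear_combination -huvw] at h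
    linear_combination h
  have hsum : (C x * X + C y * X + C z * X : R⟦X⟧) = 0 := by
    rw [← add_mul, ← add_mul, ← map_add, ← map_add, hxyz, map_zero, zero_mul]
  have hdx := hdiff x y z hxyz
  have hdy := hdiff y z x (by linear_combination hxyz)
  have hdz := hdiff z x y (by linear_combination hxyz)
  apply mul_left_cancel₀ (mul_ne_zero (mul_ne_zero (C_mul_X_ne_zero hx) (C_mul_X_ne_zero hy))
    (C_mul_X_ne_zero hz))
  unfold cdybeSummand
  generalize C x * X = a at *
  generalize C y * X = b at *
  generalize C z * X = c at *
  linear_combination hcoth + 4 * b * c * hdx + 4 * a * c * hdy + 4 * a * b * hdz - 4 * hsum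

lemma map_coeff_cdybeSummand {R M : Type*} [CommRing R] [Algebra ℚ R] [AddCommGroup M] [Module ℚ M]
    (Φ : R →ₗ[ℚ] M) (x y z : R) (n : ℕ) :
    Φ (coeff n (cdybeSummand x y z)) =
      cothCoeff (n + 1) • ∑ p ∈ antidiagonal n, (-1 : ℚ) ^ p.1 • Φ (y ^ p.1 * z ^ p.2) +
      ∑ p ∈ antidiagonal n, (cothCoeff p.1 * cothCoeff p.2) • Φ (x ^ p.1 * z ^ p.2) := by
  simp only [cdybeSummand, dividedDifference, map_add, coeff_mk, coeff_mul, coeff_rescale,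
    coeff_cothSeries]
  congr 1
  · rw [← Algebra.smul_def, map_smul, map_sum]
    congr! 2 with p
    rw [neg_pow, mul_assoc, ← map_smul, Algebra.smul_def, map_pow, map_neg, map_one]
  · rw [map_sum]
    refine Finset.sum_congr rfl fun p _ => ?_
    rw [← map_smul, Algebra.smul_def, map_mul (algebraMap ℚ R)]
    congr 1
    ring

lemma four_nsmul_map_coeff_cdybeSummand_cyclic {R M : Type*} [CommRing R] [IsDomain R]
    [Algebra ℚ R] [AddCommGroup M] [Module ℚ M] (Φ : R →ₗ[ℚ] M) {x y z : R} (hx : x ≠ 0)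
    (hy : y ≠ 0) (hz : z ≠ 0) (hxyz : x + y + z = 0) (n : ℕ) :
    4 • (Φ (coeff n (cdybeSummand x y z)) + Φ (coeff n (cdybeSummand y z x)) +
      Φ (coeff n (cdybeSummand z x y))) = if n = 0 then -Φ 1 else 0 := by
  have h := four_mul_cdybeSummand_cyclic hx hy hz hxyz
  rw [← Nat.cast_ofNat (n := 4), ← nsmul_eq_mul] at h
  rw [← map_add, ← map_add, ← map_add, ← map_add, ← map_nsmul, ← map_nsmul, h, map_neg,
    coeff_one, map_neg, apply_ite Φ, map_zero, neg_ite, neg_zero]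

end Formal

section

open MvPolynomial

lemma exists_linearMap_mvPolynomial_of_add_add_eq_zero {k M : Type*} [CommRing k] [AddCommGroup M]
    [Module k M] (φ : ℕ → ℕ → ℕ → M)
    (hφ : ∀ p q r, φ (p + 1) q r + φ p (q + 1) r + φ p q (r + 1) = 0) :
    ∃ Φ : MvPolynomial (Fin 2) k →ₗ[k] M, ∀ p q r,
      Φ (X 0 ^ p * X 1 ^ q * (-X 0 - X 1) ^ r) = φ p q r := by
  refine ⟨(basisMonomials (Fin 2) k).constr k fun s => φ (s 0) (s 1) 0, fun p q r => ?_⟩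
  induction r generalizing p q with
  | zero =>
    have hmonomial : (X 0 ^ p * X 1 ^ q : MvPolynomial (Fin 2) k) =
        basisMonomials (Fin 2) k (Finsupp.single 0 p + Finsupp.single 1 q) := by
      rw [coe_basisMonomials, X_pow_eq_monomial, X_pow_eq_monomial, monomial_mul, one_mul]
    rw [pow_zero, mul_one, hmonomial, Module.Basis.constr_basis]
    simp
  | succ r ih =>
    have hsucc : (X 0 ^ p * X 1 ^ q * (-X 0 - X 1) ^ (r + 1) : MvPolynomial (Fin 2) k) =
        -(X 0 ^ (p + 1) * X 1 ^ q * (-X 0 - X 1) ^ r) -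
          X 0 ^ p * X 1 ^ (q + 1) * (-X 0 - X 1) ^ r := by
      ring
    rw [hsucc, map_sub, map_neg, ih, ih, ← neg_add', neg_eq_iff_add_eq_zero, hφ]

end

section PowerSeriesOperator

open Finset.HasAntidiagonal (antidiagonal)
open scoped RightActions

lemma norm_pow_mul_mul_pow_le {𝔸 : Type*} [NormedRing 𝔸] (A H : 𝔸) (i j : ℕ) :
    ‖A ^ i * H * A ^ j‖ ≤ ‖A‖ ^ (i + j) * ‖H‖ := by
  induction i with
  | zero =>
    induction j with
    | zero => simp
    | succ j ih =>
      rw [pow_succ, ← mul_assoc, ← add_assoc, pow_succ, mul_right_comm]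
      exact (norm_mul_le _ _).trans (mul_le_mul_of_nonneg_right ih (norm_nonneg A))
  | succ i ih =>
    rw [pow_succ', mul_assoc, mul_assoc, ← mul_assoc (A ^ i), add_right_comm, pow_succ',
      mul_assoc ‖A‖]
    exact (norm_mul_le _ _).trans (mul_le_mul_of_nonneg_left ih (norm_nonneg A))

lemma abs_mul_pow_le_mul_div_pow {c K R r : ℝ} {n : ℕ} (hc : |c| * R ^ n ≤ K) (hr : 0 ≤ r)
    (hrR : r < R) : |c| * r ^ n ≤ K * (r / R) ^ n := by
  have hR : 0 < R ^ n := pow_pos (hr.trans_lt hrR) n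
  rw [div_pow, mul_div_assoc', le_div_iff₀ hR, mul_right_comm]
  exact mul_le_mul_of_nonneg_right hc (pow_nonneg hr n)

lemma summable_abs_mul_natCast_mul_pow_pred {c : ℕ → ℝ} {K R r : ℝ}
    (hc : ∀ n, |c n| * R ^ n ≤ K) (hr : 0 < r) (hrR : r < R) :
    Summable fun n => |c n| * (n * r ^ (n - 1)) := by
  have hq : ‖r / R‖ < 1 := by
    rwa [Real.norm_of_nonneg (div_pos hr (hr.trans hrR)).le, div_lt_one (hr.trans hrR)]
  refine .of_nonneg_of_le (fun n => by positivity) (fun n => ?_)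
    ((summable_pow_mul_geometric_of_norm_lt_one 1 hq).mul_left (K / r))
  rcases n with _ | n
  · simp
  rw [Nat.add_sub_cancel, pow_one]
  calc |c (n + 1)| * ((n + 1 : ℕ) * r ^ n)
      = (n + 1 : ℕ) / r * (|c (n + 1)| * r ^ (n + 1)) := by rw [pow_succ]; field_simp
    _ ≤ (n + 1 : ℕ) / r * (K * (r / R) ^ (n + 1)) := by
        gcongr ?_ * ?_
        exact abs_mul_pow_le_mul_div_pow (hc _) hr.le hrR
    _ = K / r * ((n + 1 : ℕ) * (r / R) ^ (n + 1)) := by ring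

variable {𝔸 : Type*} [NormedRing 𝔸] [NormedAlgebra ℝ 𝔸]

lemma summable_norm_smul_pow {c : ℕ → ℝ} {K R : ℝ} (hc : ∀ n, |c n| * R ^ n ≤ K) {A : 𝔸}
    (hA : ‖A‖ < R) : Summable fun n => ‖c n • A ^ n‖ := by
  have hq : ‖A‖ / R < 1 := (div_lt_one ((norm_nonneg A).trans_lt hA)).2 hA
  have hgeom := (summable_geometric_of_lt_one
    (div_nonneg (norm_nonneg A) ((norm_nonneg A).trans hA.le)) hq).mul_left K
  refine .of_norm_bounded_eventually_nat hgeom ?_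
  filter_upwards [Filter.eventually_gt_atTop 0] with n hn
  rw [norm_norm, norm_smul, Real.norm_eq_abs]
  exact (mul_le_mul_of_nonneg_left (norm_pow_le' A hn) (abs_nonneg _)).trans
    (abs_mul_pow_le_mul_div_pow (hc n) (norm_nonneg A) hA)

/-- The Fréchet derivative of `A ↦ A ^ n` in a noncommutative normed algebra. -/
noncomputable def powFDeriv (A : 𝔸) (n : ℕ) : 𝔸 →L[ℝ] 𝔸 :=
  ∑ i ∈ Finset.range n, A ^ (n.pred - i) •> ContinuousLinearMap.id ℝ 𝔸 <• A ^ i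

lemma powFDeriv_apply (A H : 𝔸) (n : ℕ) :
    powFDeriv A n H = ∑ i ∈ Finset.range n, A ^ (n - 1 - i) * H * A ^ i := by
  simp [powFDeriv, mul_assoc]

lemma powFDeriv_succ_apply (A H : 𝔸) (n : ℕ) :
    powFDeriv A (n + 1) H = ∑ p ∈ antidiagonal n, A ^ p.1 * H * A ^ p.2 := by
  rw [powFDeriv_apply, ← Finset.Nat.sum_antidiagonal_swap,
    Finset.Nat.sum_antidiagonal_eq_sum_range_succ_mk]
  rfl

lemma norm_powFDeriv_le (A : 𝔸) (n : ℕ) : ‖powFDeriv A n‖ ≤ n * ‖A‖ ^ (n - 1) := by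
  refine ContinuousLinearMap.opNorm_le_bound _ (by positivity) fun H => ?_
  rw [powFDeriv_apply]
  refine (norm_sum_le_of_le (Finset.range n) fun i hi => ?_).trans_eq
    (by rw [Finset.sum_const, Finset.card_range, nsmul_eq_mul, mul_assoc])
  convert norm_pow_mul_mul_pow_le A H (n - 1 - i) i using 3
  have := Finset.mem_range.1 hi
  lia

variable [CompleteSpace 𝔸]

lemma hasFDerivAt_tsum_smul_pow {c : ℕ → ℝ} {K R : ℝ} (hc : ∀ n, |c n| * R ^ n ≤ K) {A : 𝔸}
    (hA : ‖A‖ < R) :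
    HasFDerivAt (fun A : 𝔸 => ∑' n, c n • A ^ n) (∑' n, c n • powFDeriv A n) A := by
  obtain ⟨r, hAr, hrR⟩ := exists_between hA
  have hr : 0 < r := (norm_nonneg A).trans_lt hAr
  refine hasFDerivAt_tsum_of_isPreconnected (f := fun n (x : 𝔸) => c n • x ^ n)
    (summable_abs_mul_natCast_mul_pow_pred hc hr hrR) Metric.isOpen_ball
    (convex_ball (0 : 𝔸) r).isPreconnected
    (fun n x _ => (hasFDerivAt_pow' (x := x) n).const_smul (c n)) (fun n x hx => ?_)
    (Metric.mem_ball_self hr) ?_ (mem_ball_zero_iff.2 hAr)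
  · rw [norm_smul, Real.norm_eq_abs]
    have hx : ‖x‖ < r := mem_ball_zero_iff.1 hx
    exact mul_le_mul_of_nonneg_left ((norm_powFDeriv_le x n).trans (by gcongr)) (abs_nonneg _)
  · exact summable_of_ne_finset_zero (s := {0}) fun n hn => by
      rw [zero_pow (by simpa using hn), smul_zero]

lemma hasSum_fderiv_tsum_smul_pow_apply {c : ℕ → ℝ} {K R : ℝ} (hc : ∀ n, |c n| * R ^ n ≤ K)
    {A : 𝔸} (hA : ‖A‖ < R) (H : 𝔸) :
    HasSum (fun n => c (n + 1) • ∑ p ∈ antidiagonal n, A ^ p.1 * H * A ^ p.2)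
      (fderiv ℝ (fun A : 𝔸 => ∑' n, c n • A ^ n) A H) := by
  obtain ⟨r, hAr, hrR⟩ := exists_between hA
  have hsum : Summable fun n => c n • powFDeriv A n := by
    refine .of_norm_bounded (summable_abs_mul_natCast_mul_pow_pred hc
      ((norm_nonneg A).trans_lt hAr) hrR) fun n => ?_
    rw [norm_smul, Real.norm_eq_abs]
    exact mul_le_mul_of_nonneg_left ((norm_powFDeriv_le A n).trans (by gcongr)) (abs_nonneg _)
  have happly := hsum.hasSum.mapL (ContinuousLinearMap.apply ℝ 𝔸 H)
  rw [← hasSum_nat_add_iff' 1] at happly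
  simpa [powFDeriv_succ_apply, powFDeriv_apply, (hasFDerivAt_tsum_smul_pow hc hA).fderiv]
    using happly

end PowerSeriesOperator

section CothSeriesSum

open Finset.HasAntidiagonal (antidiagonal)
open Real (pi)

lemma abs_bernoulli_div_factorial_mul_two_pi_pow_le {k : ℕ} (hk : k ≠ 0) :
    |(bernoulli (2 * k) : ℝ) / (2 * k).factorial| * (2 * pi) ^ (2 * k) ≤ pi ^ 2 / 3 := by
  have hzeta := hasSum_zeta_nat hk
  have hle := hasSum_le (fun n => ?_) hzeta hasSum_zeta_two
  · have hnonneg := hzeta.nonneg fun n => by positivity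
    have habs : |(bernoulli (2 * k) : ℝ) / (2 * k).factorial| * (2 * pi) ^ (2 * k) =
        2 * |(-1) ^ (k + 1) * 2 ^ (2 * k - 1) * pi ^ (2 * k) * (bernoulli (2 * k) : ℝ) /
          (2 * k).factorial| := by
      have htwo : (2 : ℝ) ^ (2 * k) = 2 * 2 ^ (2 * k - 1) := (mul_pow_sub_one (by lia) 2).symm
      simp only [abs_mul, abs_div, abs_pow, abs_neg, abs_one, one_pow, Nat.abs_ofNat,
        abs_of_pos Real.pi_pos, mul_pow, htwo]
      ring
    rw [habs, abs_of_nonneg hnonneg]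
    linarith
  · rcases n.eq_zero_or_pos with rfl | hn
    · simp [hk]
    · have : (1 : ℝ) ≤ n := by exact_mod_cast hn
      gcongr
      lia

lemma abs_cothCoeff_mul_two_pi_pow_le (m : ℕ) :
    |(cothCoeff m : ℝ)| * (2 * pi) ^ m ≤ pi ^ 2 / 3 / (2 * pi) := by
  rw [le_div_iff₀ Real.two_pi_pos, mul_assoc, ← pow_succ]
  by_cases hm : Odd m
  · obtain ⟨k, rfl⟩ := hm
    have h := abs_bernoulli_div_factorial_mul_two_pi_pow_le k.succ_ne_zero
    rw [cothCoeff_of_odd ⟨k, rfl⟩]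
    push_cast
    rwa [abs_neg]
  · rw [cothCoeff_of_not_odd hm, Rat.cast_zero, abs_zero, zero_mul]
    positivity

variable {𝔸 : Type*} [NormedRing 𝔸] [NormedAlgebra ℝ 𝔸]

/-- The element `f(A)` of a Banach algebra, where `f(s) = 1/s - coth(s/2)/2`, as the sum of the
Taylor series of `f` at `0`. -/
noncomputable def cothSeriesSum (A : 𝔸) : 𝔸 :=
  ∑' n, (cothCoeff n : ℝ) • A ^ n

lemma cothSeriesSum_eq_neg_tsum_bernoulli (A : 𝔸) :
    cothSeriesSum A = -∑' k : ℕ,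
      (((bernoulli (2 * (k + 1)) : ℚ) : ℝ) / ((2 * (k + 1)).factorial : ℝ)) •
        A ^ (2 * (k + 1) - 1) := by
  have hinj : Function.Injective fun k : ℕ => 2 * k + 1 := fun i j hij => by grind
  rw [cothSeriesSum, ← tsum_neg, ← hinj.tsum_eq]
  · refine tsum_congr fun k => ?_
    rw [cothCoeff_of_odd ⟨k, rfl⟩, ← neg_smul]
    push_cast
    rfl
  · intro m hm
    by_contra hodd
    refine hm ?_
    dsimp only
    rw [cothCoeff_of_not_odd fun ⟨k, hk⟩ => hodd ⟨k, hk.symm⟩, Rat.cast_zero, zero_smul]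

variable [CompleteSpace 𝔸] {A : 𝔸}

lemma differentiableAt_cothSeriesSum (hA : ‖A‖ < 2 * pi) :
    DifferentiableAt ℝ (cothSeriesSum (𝔸 := 𝔸)) A :=
  (hasFDerivAt_tsum_smul_pow abs_cothCoeff_mul_two_pi_pow_le hA).differentiableAt

lemma hasSum_fderiv_cothSeriesSum_apply (hA : ‖A‖ < 2 * pi) (H : 𝔸) :
    HasSum (fun n => (cothCoeff (n + 1) : ℝ) • ∑ p ∈ antidiagonal n, A ^ p.1 * H * A ^ p.2)
      (fderiv ℝ cothSeriesSum A H) :=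
  hasSum_fderiv_tsum_smul_pow_apply abs_cothCoeff_mul_two_pi_pow_le hA H

lemma hasSum_cothSeriesSum_mul_mul_cothSeriesSum (hA : ‖A‖ < 2 * pi) (H : 𝔸) :
    HasSum (fun n => ∑ p ∈ antidiagonal n,
        (cothCoeff p.1 * cothCoeff p.2 : ℝ) • (A ^ p.1 * H * A ^ p.2))
      (cothSeriesSum A * H * cothSeriesSum A) := by
  have hpow := summable_norm_smul_pow abs_cothCoeff_mul_two_pi_pow_le hA
  have hpowH : Summable fun n => ‖(cothCoeff n : ℝ) • A ^ n * H‖ :=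
    .of_nonneg_of_le (fun _ => norm_nonneg _) (fun _ => norm_mul_le _ _) (hpow.mul_right ‖H‖)
  have hprod := (summable_norm_sum_mul_antidiagonal_of_summable_norm hpowH hpow).of_norm.hasSum
  rw [← tsum_mul_tsum_eq_tsum_sum_antidiagonal_of_summable_norm hpowH hpow,
    hpow.of_norm.tsum_mul_right] at hprod
  simpa only [cothSeriesSum, smul_mul_assoc, mul_smul_comm, smul_smul, mul_comm] using hprod

end CothSeriesSum

section InvariantLieBracket

open Finset.HasAntidiagonal (antidiagonal)
open Filter Topology

variable {g : Type*} [NormedAddCommGroup g] [InnerProductSpace ℝ g]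

/-- A continuous Lie bracket on a real inner product space for which the inner product is
ad-invariant, encoded as the map `μ ↦ ad_μ`. -/
structure IsInvariantLieBracket (B : g →L[ℝ] g →L[ℝ] g) : Prop where
  alt : ∀ v, B v v = 0
  jacobi : ∀ u v w, B u (B v w) = B (B u v) w + B v (B u w)
  inv : ∀ u v w, ⟪B u v, w⟫ + ⟪v, B u w⟫ = 0

lemma exists_continuousLinearMap_eq_of_alternating {E : Type*} [NormedAddCommGroup E]
    [NormedSpace ℝ E] [CompleteSpace E] (br : E →ₗ[ℝ] E →ₗ[ℝ] E) (br_alt : ∀ v, br v v = 0)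
    (ad : E → E →L[ℝ] E) (had : ∀ μ v, ad μ v = br μ v) :
    ∃ B : E →L[ℝ] E →L[ℝ] E, ∀ μ, B μ = ad μ := by
  have had_swap : ∀ μ v, ad μ v = -ad v μ := fun μ v => by
    rw [had, had, LinearMap.IsAlt.neg br_alt]
  let adₗ : E →ₗ[ℝ] E →L[ℝ] E :=
    { toFun := ad
      map_add' := fun μ ν => by ext v; simp [had]
      map_smul' := fun t μ => by ext v; simp [had] }
  refine ⟨.ofSeqClosedGraph (g := adₗ) fun u μ L hu hL => ?_, fun μ => rfl⟩
  ext v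
  have hleft : Tendsto (fun n => ad (u n) v) atTop (𝓝 (L v)) :=
    ((ContinuousLinearMap.apply ℝ E v).continuous.tendsto L).comp hL
  have hright : Tendsto (fun n => ad (u n) v) atTop (𝓝 (ad μ v)) := by
    simp only [fun ν => had_swap ν v]
    exact (((ad v).continuous.tendsto μ).comp hu).neg
  exact tendsto_nhds_unique hleft hright

lemma hasFDerivAt_inner_cothSeriesSum_apply [CompleteSpace g] (B : g →L[ℝ] g →L[ℝ] g) {μ : g}
    (hμ : ‖B μ‖ < 2 * Real.pi) (u w : g) :
    HasFDerivAt (fun μ => ⟪u, cothSeriesSum (B μ) w⟫)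
      (innerSL ℝ u ∘L ContinuousLinearMap.apply ℝ g w ∘L fderiv ℝ cothSeriesSum (B μ) ∘L B) μ :=
  (innerSL ℝ u ∘L ContinuousLinearMap.apply ℝ g w).hasFDerivAt.comp μ
    ((differentiableAt_cothSeriesSum hμ).hasFDerivAt.comp μ B.hasFDerivAt)

lemma hasSum_inner_apply_mul_inner {ι : Type*} (e : HilbertBasis ι ℝ g) (T : g →L[ℝ] g)
    (u v : g) : HasSum (fun r => ⟪u, T (e r)⟫ * ⟪e r, v⟫) ⟪u, T v⟫ := by
  simpa [inner_smul_right, e.repr_apply_apply, mul_comm] using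
    (e.hasSum_repr v).mapL (innerSL ℝ u ∘L T)

namespace IsInvariantLieBracket

variable {B : g →L[ℝ] g →L[ℝ] g} (hB : IsInvariantLieBracket B)
include hB

lemma neg_apply_swap (u v : g) : -B u v = B v u := by
  have h := hB.alt (u + v)
  simp only [map_add, add_apply, hB.alt, zero_add, add_zero] at h
  exact neg_eq_of_add_eq_zero_right (by rwa [add_comm] at h)

lemma inner_apply_right (μ u v : g) : ⟪u, B μ v⟫ = -⟪B μ u, v⟫ :=
  (neg_eq_of_add_eq_zero_right (hB.inv μ u v)).symm

lemma inner_cyclic (u v w : g) : ⟪B u v, w⟫ = ⟪B v w, u⟫ := by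
  rw [← hB.neg_apply_swap v u, inner_neg_left, ← hB.inner_apply_right, real_inner_comm]

lemma inner_pow_apply_right (μ u v : g) (n : ℕ) :
    ⟪u, (B μ ^ n) v⟫ = (-1) ^ n * ⟪(B μ ^ n) u, v⟫ := by
  induction n generalizing v with
  | zero => simp
  | succ n ih =>
    rw [pow_succ, mul_apply_eq_comp, ih, hB.inner_apply_right,
      ← mul_apply_eq_comp, ← pow_succ', pow_succ]
    ring

lemma inner_pow_mul_mul_pow_apply (μ u v w : g) (i j : ℕ) :
    ⟪u, (B μ ^ i * B v * B μ ^ j) w⟫ = (-1) ^ (i + 1) * ⟪B v ((B μ ^ i) u), (B μ ^ j) w⟫ := by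
  rw [mul_apply_eq_comp, mul_apply_eq_comp, hB.inner_pow_apply_right, hB.inner_apply_right,
    pow_succ]
  ring

lemma hasSum_inner_mul_inner_bracket_mul_inner {ι : Type*} (e : HilbertBasis ι ℝ g)
    (T : g →L[ℝ] g) (u v w : g) :
    HasSum (fun r => ⟪u, T (e r)⟫ * ⟪B (e r) v, T w⟫) ⟪u, (T * B v * T) w⟫ := by
  simp only [fun r => hB.inner_cyclic (e r) v (T w), fun r => real_inner_comm (e r)]
  exact hasSum_inner_apply_mul_inner e T u (B v (T w))

lemma inner_pow_succ_add (μ a b c : g) (p q r : ℕ) :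
    ⟪B ((B μ ^ (p + 1)) a) ((B μ ^ q) b), (B μ ^ r) c⟫ +
      ⟪B ((B μ ^ p) a) ((B μ ^ (q + 1)) b), (B μ ^ r) c⟫ +
      ⟪B ((B μ ^ p) a) ((B μ ^ q) b), (B μ ^ (r + 1)) c⟫ = 0 := by
  simp only [pow_succ', mul_apply_eq_comp]
  rw [← inner_add_left, ← hB.jacobi]
  exact hB.inv _ _ _

lemma neg_map_coeff_cdybeSummand_eq {R : Type*} [CommRing R] [Algebra ℚ R] (Φ : R →ₗ[ℚ] ℝ)
    (x y z : R) (μ a b c : g)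
    (hΦ : ∀ p q r, Φ (x ^ p * y ^ q * z ^ r) =
      ⟪B ((B μ ^ p) a) ((B μ ^ q) b), (B μ ^ r) c⟫) (n : ℕ) :
    -Φ (PowerSeries.coeff n (cdybeSummand x y z)) =
      ⟪b, ((cothCoeff (n + 1) : ℝ) • ∑ p ∈ antidiagonal n, B μ ^ p.1 * B a * B μ ^ p.2) c⟫ +
      ⟪a, (∑ p ∈ antidiagonal n,
        (cothCoeff p.1 * cothCoeff p.2 : ℝ) • (B μ ^ p.1 * B b * B μ ^ p.2)) c⟫ := by
  have hyz : ∀ q r, Φ (y ^ q * z ^ r) = ⟪B a ((B μ ^ q) b), (B μ ^ r) c⟫ := fun q r => by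
    simpa using hΦ 0 q r
  have hxz : ∀ p r, Φ (x ^ p * z ^ r) = ⟪B ((B μ ^ p) a) b, (B μ ^ r) c⟫ := fun p r => by
    simpa using hΦ p 0 r
  have hcoeff (m : ℕ) : (cothCoeff m : ℝ) * (-1) ^ m = -cothCoeff m := by
    simpa using cothCoeff_mul_neg_pow m (1 : ℝ)
  rw [map_coeff_cdybeSummand, neg_add, smul_apply, inner_smul_right, sum_apply, sum_apply,
    inner_sum, inner_sum, Rat.smul_def, ← mul_neg, ← Finset.sum_neg_distrib,
    ← Finset.sum_neg_distrib]
  congr! 3 with p _ p _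
  · rw [hyz, hB.inner_pow_mul_mul_pow_apply, Rat.smul_def]
    push_cast
    ring
  · rw [hxz, smul_apply, inner_smul_right, hB.inner_pow_mul_mul_pow_apply, Rat.smul_def,
      ← hB.neg_apply_swap _ b, inner_neg_left, Rat.cast_mul]
    linear_combination
      -cothCoeff p.2 * ⟪B ((B μ ^ p.1) a) b, (B μ ^ p.2) c⟫ * hcoeff p.1

variable [CompleteSpace g] {μ : g}

lemma hasSum_neg_map_coeff_cdybeSummand {R : Type*} [CommRing R] [Algebra ℚ R] (Φ : R →ₗ[ℚ] ℝ)
    (x y z : R) (hμ : ‖B μ‖ < 2 * Real.pi) (a b c : g)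
    (hΦ : ∀ p q r, Φ (x ^ p * y ^ q * z ^ r) =
      ⟪B ((B μ ^ p) a) ((B μ ^ q) b), (B μ ^ r) c⟫) :
    HasSum (fun n => -Φ (PowerSeries.coeff n (cdybeSummand x y z)))
      (⟪b, fderiv ℝ cothSeriesSum (B μ) (B a) c⟫ +
        ⟪a, (cothSeriesSum (B μ) * B b * cothSeriesSum (B μ)) c⟫) := by
  have hentry {F : ℕ → g →L[ℝ] g} {L : g →L[ℝ] g} (hF : HasSum F L) (u : g) :
      HasSum (fun n => ⟪u, F n c⟫) ⟪u, L c⟫ :=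
    (hF.mapL (ContinuousLinearMap.apply ℝ g c)).mapL (innerSL ℝ u)
  simp only [hB.neg_map_coeff_cdybeSummand_eq Φ x y z μ a b c hΦ]
  exact (hentry (hasSum_fderiv_cothSeriesSum_apply hμ (B a)) b).add
    (hentry (hasSum_cothSeriesSum_mul_mul_cothSeriesSum hμ (B b)) a)

theorem cdybe (hμ : ‖B μ‖ < 2 * Real.pi) (a b c : g) :
    (⟪b, fderiv ℝ cothSeriesSum (B μ) (B a) c⟫ +
        ⟪a, (cothSeriesSum (B μ) * B b * cothSeriesSum (B μ)) c⟫) +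
      (⟪c, fderiv ℝ cothSeriesSum (B μ) (B b) a⟫ +
        ⟪b, (cothSeriesSum (B μ) * B c * cothSeriesSum (B μ)) a⟫) +
      (⟪a, fderiv ℝ cothSeriesSum (B μ) (B c) b⟫ +
        ⟪c, (cothSeriesSum (B μ) * B a * cothSeriesSum (B μ)) b⟫) = 1 / 4 * ⟪B a b, c⟫ := by
  obtain ⟨Φ, hΦ⟩ := exists_linearMap_mvPolynomial_of_add_add_eq_zero (k := ℚ)
    (fun p q r => ⟪B ((B μ ^ p) a) ((B μ ^ q) b), (B μ ^ r) c⟫) (hB.inner_pow_succ_add μ a b c)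
  set x : MvPolynomial (Fin 2) ℚ := MvPolynomial.X 0
  set y : MvPolynomial (Fin 2) ℚ := MvPolynomial.X 1
  set z : MvPolynomial (Fin 2) ℚ := -x - y with hz
  have hxyz : x + y + z = 0 := by rw [hz]; ring
  have hz_ne : z ≠ 0 := fun h => by
    simpa [x, y, hz] using congrArg (MvPolynomial.eval fun i : Fin 2 => if i = 0 then 1 else 0) h
  have hsum := ((hB.hasSum_neg_map_coeff_cdybeSummand Φ x y z hμ a b c hΦ).add
    (hB.hasSum_neg_map_coeff_cdybeSummand Φ y z x hμ b c a fun p q r => by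
      rw [mul_comm, ← mul_assoc, hΦ, hB.inner_cyclic])).add
    (hB.hasSum_neg_map_coeff_cdybeSummand Φ z x y hμ c a b fun p q r => by
      rw [mul_assoc, mul_comm, hΦ, ← hB.inner_cyclic])
  have hcoeff (n : ℕ) : 4 * (-Φ (PowerSeries.coeff n (cdybeSummand x y z)) +
      -Φ (PowerSeries.coeff n (cdybeSummand y z x)) +
      -Φ (PowerSeries.coeff n (cdybeSummand z x y))) = if n = 0 then ⟪B a b, c⟫ else 0 := by
    have h := four_nsmul_map_coeff_cdybeSummand_cyclic Φ (MvPolynomial.X_ne_zero 0)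
      (MvPolynomial.X_ne_zero 1) hz_ne hxyz n
    have hΦ1 : Φ 1 = ⟪B a b, c⟫ := by simpa using hΦ 0 0 0
    rw [hΦ1, nsmul_eq_mul, Nat.cast_ofNat] at h
    rw [← neg_add, ← neg_add, mul_neg, h, neg_ite, neg_neg, neg_zero]
  have hsum4 := hsum.mul_left 4
  simp only [hcoeff] at hsum4
  linear_combination (1 / 4 : ℝ) * hsum4.unique (hasSum_ite_eq 0 ⟪B a b, c⟫)

end IsInvariantLieBracket

end InvariantLieBracket

theorem structure_tensor_CDYBE_general
    {ι : Type*} {g : Type*} [NormedAddCommGroup g] [InnerProductSpace ℝ g]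
    (br : g →ₗ[ℝ] g →ₗ[ℝ] g)
    (br_alt : ∀ v : g, br v v = 0)
    (br_jacobi : ∀ u v w : g, br u (br v w) = br (br u v) w + br v (br u w))
    (br_inv : ∀ u v w : g, ⟪br u v, w⟫ + ⟪v, br u w⟫ = 0)
    (e : HilbertBasis ι ℝ g)
    (f : ι → ι → ι → ℝ)
    (hf : ∀ a b c, f a b c = ⟪br (e a) (e b), e c⟫)
    (ad : g → g →L[ℝ] g)
    (had : ∀ μ v, ad μ v = br μ v)
    (T : g → g →L[ℝ] g)
    (hT : ∀ μ, T μ = -∑' k : ℕ,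
      (((bernoulli (2 * (k + 1)) : ℚ) : ℝ) / ((2 * (k + 1)).factorial : ℝ)) •
        ad μ ^ (2 * (k + 1) - 1))
    (Tab : ι → ι → g → ℝ)
    (hTab : ∀ a b μ, Tab a b μ = ⟪e a, T μ (e b)⟫)
    (U : Set g)
    (hU : U = {μ : g | ‖ad μ‖ < 2 * Real.pi}) :
    IsOpen U ∧
    (∀ a b, DifferentiableOn ℝ (Tab a b) U) ∧
    (∀ μ ∈ U, ∀ a b c,
      (∀ r, Summable fun s => Tab a r μ * f r b s * Tab s c μ) ∧
        Summable fun r => ∑' s, Tab a r μ * f r b s * Tab s c μ) ∧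
    ∀ μ ∈ U, ∀ a b c,
      (fderiv ℝ (Tab b c) μ (e a) + ∑' r, ∑' s, Tab a r μ * f r b s * Tab s c μ)
      + (fderiv ℝ (Tab c a) μ (e b) + ∑' r, ∑' s, Tab b r μ * f r c s * Tab s a μ)
      + (fderiv ℝ (Tab a b) μ (e c) + ∑' r, ∑' s, Tab c r μ * f r a s * Tab s b μ)
      = (1 / 4 : ℝ) * f a b c := by
  have : CompleteSpace g := e.repr.toIsometryEquiv.completeSpace
  obtain ⟨B, hBad⟩ := exists_continuousLinearMap_eq_of_alternating br br_alt ad had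
  have hBbr : ∀ μ v, B μ v = br μ v := fun μ v => by rw [hBad, had]
  have hB : IsInvariantLieBracket B := by
    constructor <;> simpa only [hBbr]
  have hTB : ∀ μ, T μ = cothSeriesSum (B μ) := fun μ => by
    rw [hT, cothSeriesSum_eq_neg_tsum_bernoulli, hBad]
  have hUB : ∀ μ ∈ U, ‖B μ‖ < 2 * Real.pi := fun μ hμ => by
    rw [hU] at hμ
    rwa [hBad]
  have hTab' : ∀ a b, Tab a b = fun μ => ⟪e a, cothSeriesSum (B μ) (e b)⟫ := fun a b => by
    funext μ
    rw [hTab, hTB]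
  have hderiv : ∀ μ ∈ U, ∀ a b c, fderiv ℝ (Tab b c) μ (e a) =
      ⟪e b, fderiv ℝ cothSeriesSum (B μ) (B (e a)) (e c)⟫ := fun μ hμ a b c => by
    rw [hTab', (hasFDerivAt_inner_cothSeriesSum_apply B (hUB μ hμ) (e b) (e c)).fderiv]
    rfl
  have hinner : ∀ μ a b c r, HasSum (fun s => Tab a r μ * f r b s * Tab s c μ)
      (⟪e a, T μ (e r)⟫ * ⟪B (e r) (e b), T μ (e c)⟫) := fun μ a b c r => by
    simpa only [hTab, hf, hBbr, mul_assoc] using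
      (e.hasSum_inner_mul_inner (B (e r) (e b)) (T μ (e c))).mul_left ⟪e a, T μ (e r)⟫
  have houter : ∀ μ a b c, HasSum (fun r => ∑' s, Tab a r μ * f r b s * Tab s c μ)
      ⟪e a, (T μ * B (e b) * T μ) (e c)⟫ := fun μ a b c => by
    simp only [(hinner μ a b c _).tsum_eq]
    exact hB.hasSum_inner_mul_inner_bracket_mul_inner e (T μ) (e a) (e b) (e c)
  refine ⟨?_, fun a b μ hμ => ?_,
    fun μ _ a b c => ⟨fun r => (hinner μ a b c r).summable, (houter μ a b c).summable⟩,
    fun μ hμ a b c => ?_⟩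
  · simp only [hU, ← hBad]
    exact isOpen_lt B.continuous.norm continuous_const
  · rw [hTab']
    exact (hasFDerivAt_inner_cothSeriesSum_apply B (hUB μ hμ)
      (e a) (e b)).differentiableAt.differentiableWithinAt
  · simp only [hderiv μ hμ, (houter μ _ _ _).tsum_eq]
    rw [hf, ← hBbr, hTB]
    exact hB.cdybe (hUB μ hμ) (e a) (e b) (e c)

/-- classical dynamical Yang–Baxter equation, Etingof–Varchenko.
For a Lie algebra `𝔤` with ad-invariant inner product and orthonormal basis `e`, the tensor
`T_{ab}(μ) = ⟨e_a, f(ad_μ) e_b⟩`, `f(s) = 1/s − ½coth(s/2)`, given by the Bernoulli series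
`T(μ) = −∑_{k≥1} (B_{2k}/(2k)!) ad_μ^{2k−1}`, is differentiable on the open set
`{μ : ‖ad_μ‖ < 2π}` and satisfies there
`∑_cyclic [∂T_{bc}/∂μ_a + T_{ar} f_{rbs} T_{sc}] = ¼ f_{abc}`. -/
theorem structure_tensor_CDYBE
    {n : ℕ} {g : Type*} [NormedAddCommGroup g] [InnerProductSpace ℝ g]
    [FiniteDimensional ℝ g]
    -- the Lie bracket, as a bilinear map
    (br : g →ₗ[ℝ] g →ₗ[ℝ] g)
    (br_alt : ∀ v : g, br v v = 0)
    (br_jacobi : ∀ u v w : g, br u (br v w) = br (br u v) w + br v (br u w))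
    -- ad-invariance of the inner product
    (br_inv : ∀ u v w : g, ⟪br u v, w⟫ + ⟪v, br u w⟫ = 0)
    -- an orthonormal basis
    (e : OrthonormalBasis (Fin n) ℝ g)
    -- structure constants
    (f : Fin n → Fin n → Fin n → ℝ)
    (hf : ∀ a b c, f a b c = ⟪br (e a) (e b), e c⟫)
    -- ad_μ as a continuous linear operator
    (ad : g → g →L[ℝ] g)
    (had : ∀ μ v, ad μ v = br μ v)
    -- the operator T(μ) = −∑_{k≥1} (B_{2k}/(2k)!) (ad_μ)^{2k−1} = f(ad_μ)
    (T : g → g →L[ℝ] g)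
    (hT : ∀ μ, T μ = -∑' k : ℕ,
      (((bernoulli (2 * (k + 1)) : ℚ) : ℝ) / ((2 * (k + 1)).factorial : ℝ)) •
        ad μ ^ (2 * (k + 1) - 1))
    -- its matrix entries
    (Tab : Fin n → Fin n → g → ℝ)
    (hTab : ∀ a b μ, Tab a b μ = ⟪e a, T μ (e b)⟫)
    -- the open set where the series converges
    (U : Set g)
    (hU : U = {μ : g | ‖ad μ‖ < 2 * Real.pi}) :
    IsOpen U ∧
    (∀ a b, DifferentiableOn ℝ (Tab a b) U) ∧
    ∀ μ ∈ U, ∀ a b c,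
      (fderiv ℝ (Tab b c) μ (e a) + ∑ r, ∑ s, Tab a r μ * f r b s * Tab s c μ)
      + (fderiv ℝ (Tab c a) μ (e b) + ∑ r, ∑ s, Tab b r μ * f r c s * Tab s a μ)
      + (fderiv ℝ (Tab a b) μ (e c) + ∑ r, ∑ s, Tab c r μ * f r a s * Tab s b μ)
      = (1 / 4 : ℝ) * f a b c := by
  obtain ⟨hopen, hdiff, -, hcdybe⟩ := structure_tensor_CDYBE_general br br_alt br_jacobi br_inv
    e.toHilbertBasis f (by simpa using hf) ad had T hT Tab (by simpa using hTab) U hU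
  exact ⟨hopen, hdiff, by
    simpa only [tsum_fintype, OrthonormalBasis.coe_toHilbertBasis] using hcdybe⟩
end

section
/- The Jacobian J of the exponential map is differentiable, and for every μ ∈ 𝔤 with ‖ad_μ‖ < 2π and every index a, the directional derivative of J at μ in the direction e_a equals J(μ) · Σ_{b,c} f_{abc} S_{bc}(μ), where S_{bc}(μ) = Σ_{k≥1} (B_{2k}/(2k)!) ⟨e_b, (ad_μ)^{2k−1} e_c⟩ = −T_{bc}(μ). Equivalently, on this set the logarithmic derivative of J in the direction e_a equals −Σ_{b,c} f_{abc} T_{bc}(μ). -/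
open scoped RealInnerProductSpace

/-!
Write `J(μ) = det E(-ad μ)` with `E(x) = (eˣ - 1) / x`. By Jacobi's formula the logarithmic
derivative of `det ∘ E` at `A` in the direction `H` is `tr (E(A)⁻¹ · DE_A(H))`. Since `E(A)⁻¹`
commutes with `A` and the trace is cyclic, the noncommutativity of `A` and `H` disappears, leaving
`tr ((E'/E)(A) · H)`. For `|x| < 2π` one has `E'/E = (x/(1 - e⁻ˣ) - 1)/x`, a power series in
Bernoulli numbers whose only even-degree term is the constant `1/2`. At `A = -ad μ`, `H = -ad v`
that constant contributes `-tr (ad v) / 2`, which vanishes because `ad v` is skew, and the odd part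
is the series `S`.
-/

section PowersInNormedRing

variable {𝕜 𝔸 : Type*}

theorem norm_pow_mul_le [SeminormedRing 𝔸] (x y : 𝔸) (n : ℕ) : ‖x ^ n * y‖ ≤ ‖x‖ ^ n * ‖y‖ := by
  induction n with
  | zero => simp only [pow_zero, one_mul, le_refl]
  | succ n ih =>
    calc ‖x ^ (n + 1) * y‖ = ‖x * (x ^ n * y)‖ := by rw [pow_succ', mul_assoc]
      _ ≤ ‖x‖ * (‖x‖ ^ n * ‖y‖) := (norm_mul_le _ _).trans (by gcongr)
      _ = ‖x‖ ^ (n + 1) * ‖y‖ := by ring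

theorem norm_mul_pow_le [SeminormedRing 𝔸] (x y : 𝔸) (n : ℕ) : ‖y * x ^ n‖ ≤ ‖y‖ * ‖x‖ ^ n := by
  induction n with
  | zero => simp only [pow_zero, mul_one, le_refl]
  | succ n ih =>
    calc ‖y * x ^ (n + 1)‖ = ‖y * x ^ n * x‖ := by rw [pow_succ, mul_assoc]
      _ ≤ ‖y‖ * ‖x‖ ^ n * ‖x‖ := (norm_mul_le _ _).trans (by gcongr)
      _ = ‖y‖ * ‖x‖ ^ (n + 1) := by ring

variable [NontriviallyNormedField 𝕜] [NormedRing 𝔸] [NormedAlgebra 𝕜 𝔸]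

theorem fderiv_pow_apply_eq_sum (n : ℕ) (x h : 𝔸) :
    fderiv 𝕜 (fun y : 𝔸 => y ^ n) x h =
      ∑ i ∈ Finset.range n, x ^ (n - 1 - i) * h * x ^ i := by
  rw [(hasFDerivAt_pow' (𝕜 := 𝕜) n (x := x)).fderiv]
  simp [mul_assoc]

variable (𝕜) in
theorem norm_fderiv_pow_le (n : ℕ) (x : 𝔸) :
    ‖fderiv 𝕜 (fun y : 𝔸 => y ^ n) x‖ ≤ n * ‖x‖ ^ (n - 1) := by
  refine ContinuousLinearMap.opNorm_le_bound _ (by positivity) fun h => ?_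
  have hterm (i : ℕ) (hi : i ∈ Finset.range n) :
      ‖x ^ (n - 1 - i) * h * x ^ i‖ ≤ ‖x‖ ^ (n - 1) * ‖h‖ := by
    have hexp : n - 1 = n - 1 - i + i := by have := Finset.mem_range.1 hi; omega
    calc ‖x ^ (n - 1 - i) * h * x ^ i‖ ≤ ‖x‖ ^ (n - 1 - i) * ‖h‖ * ‖x‖ ^ i :=
          (norm_mul_pow_le _ _ _).trans (by gcongr; exact norm_pow_mul_le _ _ _)
      _ = ‖x‖ ^ (n - 1) * ‖h‖ := by rw [hexp, pow_add, ← hexp]; ring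
  calc ‖fderiv 𝕜 (fun y : 𝔸 => y ^ n) x h‖
      ≤ ∑ _i ∈ Finset.range n, ‖x‖ ^ (n - 1) * ‖h‖ := by
        rw [fderiv_pow_apply_eq_sum]; exact norm_sum_le_of_le _ hterm
    _ = n * ‖x‖ ^ (n - 1) * ‖h‖ := by
        rw [Finset.sum_const, Finset.card_range, nsmul_eq_mul, mul_assoc]

theorem map_mul_fderiv_pow_of_tracial {F : Type*} [AddCommGroup F] [Module 𝕜 F] {τ : 𝔸 →ₗ[𝕜] F}
    (hτ : ∀ a b, τ (a * b) = τ (b * a)) {x k : 𝔸} (hk : Commute x k) (n : ℕ) (h : 𝔸) :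
    τ (k * fderiv 𝕜 (fun y : 𝔸 => y ^ n) x h) = (n : 𝕜) • τ (k * x ^ (n - 1) * h) := by
  have hterm (i : ℕ) (hi : i ∈ Finset.range n) :
      τ (k * (x ^ (n - 1 - i) * h * x ^ i)) = τ (k * x ^ (n - 1) * h) := by
    have hexp : i + (n - 1 - i) = n - 1 := by have := Finset.mem_range.1 hi; omega
    calc τ (k * (x ^ (n - 1 - i) * h * x ^ i)) = τ (x ^ i * (k * (x ^ (n - 1 - i) * h))) := by
          rw [← mul_assoc k, hτ]
      _ = τ (k * (x ^ i * x ^ (n - 1 - i)) * h) := by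
          rw [← mul_assoc, (hk.pow_left i).eq]; simp only [mul_assoc]
      _ = τ (k * x ^ (n - 1) * h) := by rw [← pow_add, hexp]
  rw [fderiv_pow_apply_eq_sum, Finset.mul_sum, map_sum, Finset.sum_congr rfl hterm,
    Finset.sum_const, Finset.card_range, Nat.cast_smul_eq_nsmul]

end PowersInNormedRing

section FormalSeries

open PowerSeries

/-- Absolute convergence of the formal power series `p` at radius `r`. -/
def AbsSummableAt {𝕜 : Type*} [NormedField 𝕜] (p : 𝕜⟦X⟧) (r : ℝ) : Prop :=
  Summable fun n => ‖coeff n p‖ * r ^ n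

/-- The value `p(x)` of a formal power series at an element of a topological algebra; the junk
value `0` where the series is not summable. -/
noncomputable def evalSeries {𝕜 𝔸 : Type*} [CommSemiring 𝕜] [Semiring 𝔸] [Algebra 𝕜 𝔸]
    [TopologicalSpace 𝔸] (p : 𝕜⟦X⟧) (x : 𝔸) : 𝔸 :=
  ∑' n, coeff n p • x ^ n

theorem commute_evalSeries {𝕜 𝔸 : Type*} [CommSemiring 𝕜] [Semiring 𝔸] [Algebra 𝕜 𝔸]
    [TopologicalSpace 𝔸] [IsTopologicalSemiring 𝔸] [T2Space 𝔸] {x y : 𝔸} (h : Commute x y)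
    (p : 𝕜⟦X⟧) :
    Commute x (evalSeries p y) :=
  Commute.tsum_right _ fun n => (h.pow_right n).smul_right _

theorem evalSeries_one {𝕜 𝔸 : Type*} [CommSemiring 𝕜] [Semiring 𝔸] [Algebra 𝕜 𝔸]
    [TopologicalSpace 𝔸] (x : 𝔸) : evalSeries (1 : 𝕜⟦X⟧) x = 1 := by
  rw [evalSeries, tsum_eq_single 0 fun n hn => by rw [coeff_one, if_neg hn, zero_smul]]
  simp only [coeff_zero_one, pow_zero, one_smul]

namespace AbsSummableAt

section NormedField

variable {𝕜 𝔸 : Type*} [NormedField 𝕜] [NormedRing 𝔸] [NormedAlgebra 𝕜 𝔸]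
  {p q : 𝕜⟦X⟧} {r s : ℝ} {x : 𝔸}

theorem mono (hp : AbsSummableAt p s) (hr : 0 ≤ r) (hrs : r ≤ s) : AbsSummableAt p r :=
  hp.of_nonneg_of_le (fun _ => by positivity) fun _ => by gcongr

theorem summable_norm (hp : AbsSummableAt p ‖x‖) : Summable fun n => ‖coeff n p • x ^ n‖ := by
  refine (hp.mul_right ‖(1 : 𝔸)‖).of_nonneg_of_le (fun _ => norm_nonneg _) fun n => ?_
  calc ‖coeff n p • x ^ n‖ = ‖coeff n p‖ * ‖x ^ n * 1‖ := by rw [norm_smul, mul_one]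
    _ ≤ ‖coeff n p‖ * (‖x‖ ^ n * ‖(1 : 𝔸)‖) := by gcongr; exact norm_pow_mul_le _ _ _
    _ = ‖coeff n p‖ * ‖x‖ ^ n * ‖(1 : 𝔸)‖ := by ring

theorem hasSum_evalSeries [CompleteSpace 𝔸] (hp : AbsSummableAt p ‖x‖) :
    HasSum (fun n => coeff n p • x ^ n) (evalSeries p x) :=
  hp.summable_norm.of_norm.hasSum

theorem hasSum_mul [CompleteSpace 𝔸] (hp : AbsSummableAt p ‖x‖) (hq : AbsSummableAt q ‖x‖) :
    HasSum (fun n => coeff n (p * q) • x ^ n) (evalSeries p x * evalSeries q x) := by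
  have hcauchy (n : ℕ) : ∑ kl ∈ Finset.HasAntidiagonal.antidiagonal n,
      (coeff kl.1 p • x ^ kl.1) * (coeff kl.2 q • x ^ kl.2) = coeff n (p * q) • x ^ n := by
    rw [coeff_mul, Finset.sum_smul]
    refine Finset.sum_congr rfl fun kl hkl => ?_
    rw [smul_mul_smul_comm, ← pow_add, Finset.HasAntidiagonal.mem_antidiagonal.1 hkl]
  have hsummable :=
    (summable_norm_sum_mul_antidiagonal_of_summable_norm hp.summable_norm hq.summable_norm).of_norm
  rw [evalSeries, evalSeries, tsum_mul_tsum_eq_tsum_sum_antidiagonal_of_summable_norm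
    hp.summable_norm hq.summable_norm]
  simpa only [hcauchy] using hsummable.hasSum

theorem evalSeries_mul [CompleteSpace 𝔸] (hp : AbsSummableAt p ‖x‖) (hq : AbsSummableAt q ‖x‖) :
    evalSeries (p * q) x = evalSeries p x * evalSeries q x :=
  (hp.hasSum_mul hq).tsum_eq

theorem summable_natCast_mul (hp : AbsSummableAt p s) (hr : 0 ≤ r) (hrs : r < s) :
    Summable fun n : ℕ => ‖coeff n p‖ * (n * r ^ (n - 1)) := by
  refine (hp.mul_right (s - r)⁻¹).of_nonneg_of_le (fun _ => by positivity) fun n => ?_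
  have hsr : 0 < s - r := sub_pos.2 hrs
  have hpow : n * r ^ (n - 1) * (s - r) ≤ s ^ n := by
    have := pow_add_mul_le_add_pow hr (by linarith : 0 ≤ 2 * r + (s - r)) n
    rw [add_sub_cancel] at this
    linarith [pow_nonneg hr n]
  calc ‖coeff n p‖ * (n * r ^ (n - 1)) ≤ ‖coeff n p‖ * (s ^ n / (s - r)) := by
        gcongr; exact (le_div_iff₀ hsr).2 hpow
    _ = ‖coeff n p‖ * s ^ n * (s - r)⁻¹ := by rw [div_eq_mul_inv, mul_assoc]

theorem derivative (hp : AbsSummableAt p s) (hr : 0 ≤ r) (hrs : r < s) :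
    AbsSummableAt (PowerSeries.derivative 𝕜 p) r := by
  refine ((summable_nat_add_iff 1).2 (hp.summable_natCast_mul hr hrs)).of_nonneg_of_le
    (fun _ => by positivity) fun n => ?_
  have hcast : ‖(n + 1 : 𝕜)‖ ≤ (n + 1 : ℕ) := by
    simpa only [norm_one, mul_one, Nat.cast_add_one] using Nat.norm_cast_le (α := 𝕜) (n + 1)
  calc ‖coeff n (PowerSeries.derivative 𝕜 p)‖ * r ^ n
      = ‖coeff (n + 1) p‖ * ‖(n + 1 : 𝕜)‖ * r ^ n := by rw [coeff_derivative, norm_mul]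
    _ ≤ ‖coeff (n + 1) p‖ * (n + 1 : ℕ) * r ^ n := by gcongr
    _ = ‖coeff (n + 1) p‖ * ((n + 1 : ℕ) * r ^ (n + 1 - 1)) := by
      rw [Nat.add_sub_cancel, mul_assoc]

end NormedField

section RCLike

variable {𝕜 𝔸 : Type*} [RCLike 𝕜] [NormedRing 𝔸] [NormedAlgebra 𝕜 𝔸] [CompleteSpace 𝔸]
  {p : 𝕜⟦X⟧} {r : ℝ} {x : 𝔸}

theorem summable_smul_fderiv_pow (hp : AbsSummableAt p r) (hx : ‖x‖ < r) :
    Summable fun n => coeff n p • fderiv 𝕜 (fun y : 𝔸 => y ^ n) x :=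
  .of_norm_bounded (hp.summable_natCast_mul (norm_nonneg x) hx) fun n => by
    rw [norm_smul]; gcongr; exact norm_fderiv_pow_le 𝕜 n x

theorem hasFDerivAt_evalSeries (hp : AbsSummableAt p r) (hx : ‖x‖ < r) :
    HasFDerivAt (evalSeries p) (∑' n, coeff n p • fderiv 𝕜 (fun y : 𝔸 => y ^ n) x) x := by
  let : NormedSpace ℝ 𝔸 := NormedSpace.restrictScalars ℝ 𝕜 𝔸
  obtain ⟨s, hxs, hsr⟩ := exists_between hx
  have hs : 0 ≤ s := (norm_nonneg x).trans hxs.le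
  have hmem : x ∈ Metric.ball (0 : 𝔸) s := mem_ball_zero_iff.2 hxs
  have hpreconn : IsPreconnected (Metric.ball (0 : 𝔸) s) := (convex_ball 0 s).isPreconnected
  have hterm (n : ℕ) (y : 𝔸) (_ : y ∈ Metric.ball (0 : 𝔸) s) :
      HasFDerivAt (fun z : 𝔸 => coeff n p • z ^ n)
        (coeff n p • fderiv 𝕜 (fun z : 𝔸 => z ^ n) y) y :=
    (differentiableAt_pow (𝕜 := 𝕜) (x := y) n).hasFDerivAt.fun_const_smul (coeff n p)
  have hbound (n : ℕ) (y : 𝔸) (hy : y ∈ Metric.ball (0 : 𝔸) s) :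
      ‖coeff n p • fderiv 𝕜 (fun z : 𝔸 => z ^ n) y‖ ≤ ‖coeff n p‖ * (n * s ^ (n - 1)) := by
    have hys : ‖y‖ ≤ s := (mem_ball_zero_iff.1 hy).le
    rw [norm_smul]
    gcongr
    exact (norm_fderiv_pow_le 𝕜 n y).trans (by gcongr)
  have hsum : Summable fun n => coeff n p • x ^ n :=
    (hp.mono (norm_nonneg x) hx.le).hasSum_evalSeries.summable
  have hderiv := hasFDerivAt_tsum_of_isPreconnected (hp.summable_natCast_mul hs hsr)
    Metric.isOpen_ball hpreconn hterm hbound hmem hsum hmem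
  exact hderiv

theorem map_mul_fderiv_evalSeries_of_tracial {F : Type*} [NormedAddCommGroup F] [NormedSpace 𝕜 F]
    {τ : 𝔸 →L[𝕜] F} (hτ : ∀ a b, τ (a * b) = τ (b * a)) (hp : AbsSummableAt p r) (hx : ‖x‖ < r)
    {k : 𝔸} (hk : Commute x k) (h : 𝔸) :
    τ (k * fderiv 𝕜 (evalSeries p) x h) =
      τ (k * evalSeries (PowerSeries.derivative 𝕜 p) x * h) := by
  let φ : 𝔸 →L[𝕜] F := τ ∘L ContinuousLinearMap.mul 𝕜 𝔸 k
  have hφ (a : 𝔸) : φ a = τ (k * a) := rfl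
  have hterm (n : ℕ) : φ ((coeff n p • fderiv 𝕜 (fun y : 𝔸 => y ^ n) x) h) =
      (coeff n p * n) • τ (k * x ^ (n - 1) * h) := by
    rw [smul_apply, map_smul, hφ, mul_smul, ← ContinuousLinearMap.coe_coe,
      map_mul_fderiv_pow_of_tracial (τ := (τ : 𝔸 →ₗ[𝕜] F)) hτ hk]
  have hleft : HasSum (fun n : ℕ => (coeff n p * n) • τ (k * x ^ (n - 1) * h))
      (φ (fderiv 𝕜 (evalSeries p) x h)) := by
    have hsum := (hp.summable_smul_fderiv_pow hx).hasSum.mapL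
      (φ ∘L ContinuousLinearMap.apply 𝕜 𝔸 h)
    rw [(hp.hasFDerivAt_evalSeries hx).fderiv]
    exact hsum.congr_fun fun n => (hterm n).symm
  have hright : HasSum (fun n : ℕ => (coeff (n + 1) p * (n + 1 : ℕ)) • τ (k * x ^ n * h))
      (τ (k * evalSeries (PowerSeries.derivative 𝕜 p) x * h)) := by
    have hsum := (hp.derivative (norm_nonneg x) hx).hasSum_evalSeries
    refine (τ.hasSum ((hsum.mul_left k).mul_right h)).congr_fun fun n => ?_
    rw [coeff_derivative, mul_smul_comm, smul_mul_assoc, map_smul, Nat.cast_add_one]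
  rw [← hasSum_nat_add_iff' 1, Finset.sum_range_one, Nat.cast_zero, mul_zero, zero_smul,
    sub_zero] at hleft
  exact hleft.unique hright

end RCLike

end AbsSummableAt

section BernoulliSeries

variable (A : Type*) [CommRing A] [Algebra ℚ A]

/-- The formal power series of `(eˣ - 1) / x`. -/
noncomputable def expQuotSeries : A⟦X⟧ :=
  PowerSeries.mk fun n => algebraMap ℚ A (1 / (n + 1).factorial)

/-- The formal power series of the logarithmic derivative `1 / (1 - e⁻ˣ) - 1 / x` of
`(eˣ - 1) / x`. -/
noncomputable def logDerivSeries : A⟦X⟧ :=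
  PowerSeries.mk fun n => algebraMap ℚ A (bernoulli' (n + 1) / (n + 1).factorial)

theorem X_mul_expQuotSeries : X * expQuotSeries A = PowerSeries.exp A - 1 := by
  ext n
  cases n with
  | zero => simp
  | succ n => simp [expQuotSeries, coeff_succ_X_mul, coeff_exp, coeff_one]

theorem X_mul_logDerivSeries : X * logDerivSeries A = bernoulli'PowerSeries A - 1 := by
  ext n
  cases n with
  | zero => simp [bernoulli'PowerSeries]
  | succ n => simp [logDerivSeries, coeff_succ_X_mul, bernoulli'PowerSeries, coeff_one]

theorem bernoulliPowerSeries_mul_expQuotSeries :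
    bernoulliPowerSeries A * expQuotSeries A = 1 := by
  refine X_mul_cancel ?_
  rw [mul_left_comm, X_mul_expQuotSeries, bernoulliPowerSeries_mul_exp_sub_one, mul_one]

theorem bernoulli'PowerSeries_eq_bernoulliPowerSeries_mul_exp :
    bernoulli'PowerSeries A = bernoulliPowerSeries A * PowerSeries.exp A := by
  refine X_mul_cancel ?_
  rw [← bernoulliPowerSeries_mul_exp_sub_one A, mul_right_comm, mul_assoc,
    bernoulli'PowerSeries_mul_exp_sub_one, ← bernoulliPowerSeries_mul_exp_sub_one A]
  ring

theorem expQuotSeries_add_X_mul_derivative :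
    expQuotSeries A + X * PowerSeries.derivative A (expQuotSeries A) = PowerSeries.exp A := by
  have h := congrArg (PowerSeries.derivative A) (X_mul_expQuotSeries A)
  simpa [add_comm, PowerSeries.derivative_exp] using h

theorem derivative_expQuotSeries_mul_bernoulliPowerSeries :
    PowerSeries.derivative A (expQuotSeries A) * bernoulliPowerSeries A = logDerivSeries A := by
  refine X_mul_cancel ?_
  calc X * (PowerSeries.derivative A (expQuotSeries A) * bernoulliPowerSeries A)
      = bernoulliPowerSeries A * PowerSeries.exp A
          - bernoulliPowerSeries A * expQuotSeries A := by
        rw [← expQuotSeries_add_X_mul_derivative]; ring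
    _ = X * logDerivSeries A := by
        rw [← bernoulli'PowerSeries_eq_bernoulliPowerSeries_mul_exp,
          bernoulliPowerSeries_mul_expQuotSeries, X_mul_logDerivSeries]

theorem evalSeries_expQuotSeries {𝕜 𝔸 : Type*} [Field 𝕜] [CharZero 𝕜] [Semiring 𝔸] [Algebra 𝕜 𝔸]
    [TopologicalSpace 𝔸] (x : 𝔸) :
    evalSeries (expQuotSeries 𝕜) x = ∑' m : ℕ, ((m + 1).factorial : 𝕜)⁻¹ • x ^ m := by
  simp [evalSeries, expQuotSeries]

end BernoulliSeries

section BernoulliBounds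

open Real

theorem absSummableAt_expQuotSeries {r : ℝ} (hr : 0 ≤ r) : AbsSummableAt (expQuotSeries ℝ) r := by
  refine (summable_pow_div_factorial r).of_nonneg_of_le (fun _ => by positivity) fun n => ?_
  calc ‖coeff n (expQuotSeries ℝ)‖ * r ^ n = r ^ n / (n + 1).factorial := by
        simp [expQuotSeries, div_eq_inv_mul]
    _ ≤ r ^ n / n.factorial := by gcongr; exact n.le_succ

theorem tsum_one_div_pow_le {k : ℕ} (hk : 2 ≤ k) : ∑' m : ℕ, 1 / (m : ℝ) ^ k ≤ π ^ 2 / 6 := by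
  refine hasSum_le (fun m => ?_) (summable_one_div_nat_pow.2 hk).hasSum hasSum_zeta_two
  rcases m.eq_zero_or_pos with rfl | hm
  · simp [zero_pow (by omega : k ≠ 0)]
  · have : (1 : ℝ) ≤ m := mod_cast hm
    gcongr

theorem abs_bernoulli_two_mul_div_factorial {k : ℕ} (hk : k ≠ 0) :
    |(bernoulli (2 * k) : ℝ) / (2 * k).factorial| =
      2 / (2 * π) ^ (2 * k) * ∑' m : ℕ, 1 / (m : ℝ) ^ (2 * k) := by
  have hz := hasSum_zeta_nat hk
  have hnonneg := hz.nonneg fun m => by positivity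
  have h2 : (2 : ℝ) ^ (2 * k) = 2 ^ (2 * k - 1) * 2 := by rw [← pow_succ]; congr 1; omega
  rw [hz.tsum_eq, ← abs_of_nonneg hnonneg]
  simp only [abs_mul, abs_div, abs_pow, abs_neg, abs_one, one_pow, one_mul, mul_pow, h2,
        abs_of_pos pi_pos, Nat.abs_cast, Nat.abs_ofNat]
  field_simp

theorem abs_bernoulli_div_factorial_le (n : ℕ) :
    |(bernoulli n : ℝ) / n.factorial| ≤ 4 / (2 * π) ^ n := by
  rcases n.even_or_odd' with ⟨k, rfl | rfl⟩
  · rcases eq_or_ne k 0 with rfl | hk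
    · norm_num
    have hpi : π ^ 2 / 6 ≤ 2 := by nlinarith [pi_pos, pi_lt_d2]
    calc |(bernoulli (2 * k) : ℝ) / (2 * k).factorial|
        = 2 / (2 * π) ^ (2 * k) * ∑' m : ℕ, 1 / (m : ℝ) ^ (2 * k) :=
          abs_bernoulli_two_mul_div_factorial hk
      _ ≤ 2 / (2 * π) ^ (2 * k) * 2 := by
          gcongr; exact (tsum_one_div_pow_le (by omega)).trans hpi
      _ = 4 / (2 * π) ^ (2 * k) := by ring
  · rcases eq_or_ne k 0 with rfl | hk
    · rw [le_div_iff₀ (by positivity)]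
      norm_num [abs_div]
      linarith [pi_lt_four, abs_of_pos pi_pos]
    · rw [bernoulli_eq_zero_of_odd (odd_two_mul_add_one k) (by omega), Rat.cast_zero, zero_div,
        abs_zero]
      positivity

theorem absSummableAt_bernoulliPowerSeries {r : ℝ} (hr : 0 ≤ r) (hr' : r < 2 * π) :
    AbsSummableAt (bernoulliPowerSeries ℝ) r := by
  have hgeom := (summable_geometric_of_lt_one (r := r / (2 * π)) (by positivity)
    ((div_lt_one two_pi_pos).2 hr')).mul_left 4
  refine hgeom.of_nonneg_of_le (fun _ => by positivity) fun n => ?_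
  calc ‖coeff n (bernoulliPowerSeries ℝ)‖ * r ^ n ≤ 4 / (2 * π) ^ n * r ^ n := by
        gcongr
        rw [bernoulliPowerSeries, coeff_mk, eq_ratCast, Rat.cast_div, Rat.cast_natCast]
        exact abs_bernoulli_div_factorial_le n
    _ = 4 * (r / (2 * π)) ^ n := by rw [div_pow]; ring

theorem absSummableAt_derivative_expQuotSeries {r : ℝ} (hr : 0 ≤ r) :
    AbsSummableAt (PowerSeries.derivative ℝ (expQuotSeries ℝ)) r :=
  (absSummableAt_expQuotSeries (add_nonneg hr zero_le_one)).derivative hr (lt_add_one r)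

end BernoulliBounds

section BernoulliEval

variable {𝔸 : Type*} [NormedRing 𝔸] [NormedAlgebra ℝ 𝔸] [CompleteSpace 𝔸]

theorem differentiable_evalSeries_expQuotSeries :
    Differentiable ℝ (evalSeries (expQuotSeries ℝ) : 𝔸 → 𝔸) := fun x =>
  ((absSummableAt_expQuotSeries (by positivity)).hasFDerivAt_evalSeries
    (lt_add_one ‖x‖)).differentiableAt

theorem hasSum_evalSeries_logDerivSeries {x : 𝔸} (hx : ‖x‖ < 2 * Real.pi) :
    HasSum (fun n => coeff n (logDerivSeries ℝ) • x ^ n) (evalSeries (logDerivSeries ℝ) x) := by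
  have h := (absSummableAt_derivative_expQuotSeries (norm_nonneg x)).hasSum_mul
    (absSummableAt_bernoulliPowerSeries (norm_nonneg x) hx)
  rw [derivative_expQuotSeries_mul_bernoulliPowerSeries] at h
  exact h.summable.hasSum

end BernoulliEval

theorem hasSum_even_bernoulli_smul_pow {𝔸 : Type*} [Ring 𝔸] [Algebra ℝ 𝔸]
    [TopologicalSpace 𝔸] [IsTopologicalAddGroup 𝔸] {a s : 𝔸}
    (hs : HasSum (fun n => coeff n (logDerivSeries ℝ) • (-a) ^ n) s) :
    HasSum
      (fun k : ℕ =>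
        ((bernoulli (2 * (k + 1)) : ℝ) / (2 * (k + 1)).factorial) • a ^ (2 * (k + 1) - 1))
      ((2⁻¹ : ℝ) • 1 - s) := by
  have htail : HasSum (fun n => -(coeff (n + 1) (logDerivSeries ℝ) • (-a) ^ (n + 1)))
      ((2⁻¹ : ℝ) • 1 - s) := by
    simpa [logDerivSeries] using ((hasSum_nat_add_iff' 1).2 hs).neg
  have hinj : Function.Injective fun k : ℕ => 2 * k := mul_right_injective₀ two_ne_zero
  refine ((hinj.hasSum_iff fun n hn => ?_).2 htail).congr_fun fun k => ?_
  · have hodd : Odd n := Nat.not_even_iff_odd.1 fun ⟨k, hk⟩ => hn ⟨k, by simp only; omega⟩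
    have hzero : bernoulli' (n + 2) = 0 :=
      bernoulli'_eq_zero_of_odd (hodd.add_even even_two) (by omega)
    simp [logDerivSeries, hzero]
  · have hpow : (-a) ^ (2 * k + 1) = -a ^ (2 * (k + 1) - 1) := (odd_two_mul_add_one k).neg_pow a
    have hbern : bernoulli (2 * (k + 1)) = bernoulli' (2 * k + 1 + 1) :=
      bernoulli_eq_bernoulli'_of_ne_one (by omega)
    rw [Function.comp_apply, hpow, smul_neg, neg_neg, hbern, logDerivSeries, coeff_mk, eq_ratCast,
      Rat.cast_div, Rat.cast_natCast, mul_add_one]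

section Determinant

variable {𝕜 E : Type*} [NontriviallyNormedField 𝕜] [CompleteSpace 𝕜] [NormedAddCommGroup E]
  [NormedSpace 𝕜 E] [FiniteDimensional 𝕜 E]

variable (𝕜 E) in
/-- The trace as a continuous linear functional on the algebra of operators. -/
noncomputable def traceCLM : (E →L[𝕜] E) →L[𝕜] 𝕜 :=
  LinearMap.toContinuousLinearMap (LinearMap.trace 𝕜 E ∘ₗ ContinuousLinearMap.coeLM 𝕜)

theorem traceCLM_apply (A : E →L[𝕜] E) : traceCLM 𝕜 E A = LinearMap.trace 𝕜 E A := rfl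

theorem traceCLM_mul_comm (A B : E →L[𝕜] E) : traceCLM 𝕜 E (A * B) = traceCLM 𝕜 E (B * A) :=
  LinearMap.trace_mul_comm 𝕜 (A : E →ₗ[𝕜] E) B

theorem differentiable_det : Differentiable 𝕜 (ContinuousLinearMap.det : (E →L[𝕜] E) → 𝕜) := by
  let b := Module.finBasis 𝕜 E
  let entry (i j) : (E →L[𝕜] E) →L[𝕜] 𝕜 :=
    LinearMap.toContinuousLinearMap (b.coord i) ∘L ContinuousLinearMap.apply 𝕜 E (b j)
  have hdet : (ContinuousLinearMap.det : (E →L[𝕜] E) → 𝕜) =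
      fun A => ∑ σ : Equiv.Perm (Fin (Module.finrank 𝕜 E)),
        (Equiv.Perm.sign σ : ℤ) * ∏ i, entry (σ i) i A := by
    ext A
    rw [ContinuousLinearMap.det, ← LinearMap.det_toMatrix b, Matrix.det_apply']
    simp [LinearMap.toMatrix_apply, entry]
  rw [hdet]
  fun_prop

theorem hasDerivAt_det_one_add_smul (A : E →L[𝕜] E) :
    HasDerivAt (fun t : 𝕜 => (1 + t • A).det) (traceCLM 𝕜 E A) 0 := by
  let b := Module.finBasis 𝕜 E
  let M := LinearMap.toMatrix b b A
  let P := (1 + (Polynomial.X : Polynomial 𝕜) • M.map Polynomial.C).det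
  have hdet (t : 𝕜) : (1 + t • A).det = P.eval t := by
    have hM : LinearMap.toMatrix b b (1 + t • A : E →L[𝕜] E) = 1 + t • M := by
      rw [← LinearMap.toMatrix_one b, ← map_smul, ← map_add]; rfl
    rw [ContinuousLinearMap.det, ← LinearMap.det_toMatrix b, hM]
    simp [P, eval_det, ← Matrix.smul_eq_mul_diagonal]
  have hderiv : P.derivative.eval 0 = traceCLM 𝕜 E A := by
    rw [Matrix.derivative_det_one_add_X_smul, traceCLM_apply, LinearMap.trace_eq_matrix_trace 𝕜 b]
  simpa only [hdet, hderiv] using P.hasDerivAt 0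

theorem hasFDerivAt_det_one : HasFDerivAt ContinuousLinearMap.det (traceCLM 𝕜 E) 1 := by
  have hdiff := (differentiable_det (𝕜 := 𝕜) (E := E) 1).hasFDerivAt
  suffices fderiv 𝕜 ContinuousLinearMap.det 1 = traceCLM 𝕜 E by rwa [this] at hdiff
  ext A
  have hline : HasDerivAt (fun t : 𝕜 => 1 + t • A) A 0 := by
    simpa using ((hasDerivAt_id (0 : 𝕜)).smul_const A).const_add 1
  exact (hdiff.comp_hasDerivAt_of_eq 0 hline (by simp)).unique (hasDerivAt_det_one_add_smul A)

theorem hasFDerivAt_det_of_mul_eq_one {A B : E →L[𝕜] E} (hAB : A * B = 1) :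
    HasFDerivAt ContinuousLinearMap.det
      (A.det • traceCLM 𝕜 E ∘L ContinuousLinearMap.mul 𝕜 (E →L[𝕜] E) B) A := by
  have hBA : B * A = 1 := ContinuousLinearMap.coe_injective
    ((LinearMap.comp_eq_id_comm 𝕜 E).1 (congrArg ContinuousLinearMap.toLinearMap hAB))
  have hfactor (X : E →L[𝕜] E) : X.det = A.det * (B * X).det :=
    calc X.det = (A * (B * X)).det := by rw [← mul_assoc, hAB, one_mul]
      _ = A.det * (B * X).det := LinearMap.det_comp (A : E →ₗ[𝕜] E) (B * X : E →L[𝕜] E)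
  have hmul : HasFDerivAt (fun X => B * X) (ContinuousLinearMap.mul 𝕜 (E →L[𝕜] E) B) A :=
    (ContinuousLinearMap.mul 𝕜 (E →L[𝕜] E) B).hasFDerivAt
  have hone : HasFDerivAt ContinuousLinearMap.det (traceCLM 𝕜 E) (B * A) :=
    hBA ▸ hasFDerivAt_det_one
  exact ((hone.comp A hmul).const_mul A.det).congr_of_eventuallyEq (.of_forall hfactor)

end Determinant

section InnerProduct

variable {E : Type*} [NormedAddCommGroup E] [InnerProductSpace ℝ E]

theorem trace_mul_eq_sum_inner {ι : Type*} [Fintype ι] (e : OrthonormalBasis ι ℝ E)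
    (A B : E →ₗ[ℝ] E) :
    LinearMap.trace ℝ E (A * B) = ∑ i, ∑ j, ⟪B (e i), e j⟫ * ⟪e i, A (e j)⟫ := by
  rw [LinearMap.trace_eq_sum_inner _ e]
  refine Finset.sum_congr rfl fun i _ => ?_
  conv_lhs => rw [Module.End.mul_apply, ← e.sum_repr' (B (e i)), map_sum, inner_sum]
  refine Finset.sum_congr rfl fun j _ => ?_
  rw [map_smul, inner_smul_right, real_inner_comm]

theorem trace_eq_zero_of_skew [FiniteDimensional ℝ E] {A : E →ₗ[ℝ] E}
    (hA : ∀ v w, ⟪A v, w⟫ + ⟪v, A w⟫ = 0) :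
    LinearMap.trace ℝ E A = 0 := by
  rw [LinearMap.trace_eq_sum_inner A (stdOrthonormalBasis ℝ E)]
  refine Finset.sum_eq_zero fun i _ => ?_
  have := hA (stdOrthonormalBasis ℝ E i) (stdOrthonormalBasis ℝ E i)
  rw [real_inner_comm] at this
  linarith

end InnerProduct

section DetExpQuot

variable {E : Type*} [NormedAddCommGroup E] [NormedSpace ℝ E] [FiniteDimensional ℝ E]

theorem differentiable_det_evalSeries_expQuotSeries :
    Differentiable ℝ fun A : E →L[ℝ] E => (evalSeries (expQuotSeries ℝ) A).det :=
  have := FiniteDimensional.complete ℝ E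
  Differentiable.comp (g := (ContinuousLinearMap.det : (E →L[ℝ] E) → ℝ)) differentiable_det
    differentiable_evalSeries_expQuotSeries

theorem fderiv_det_evalSeries_expQuotSeries {A : E →L[ℝ] E} (hA : ‖A‖ < 2 * Real.pi)
    (H : E →L[ℝ] E) :
    fderiv ℝ (fun X : E →L[ℝ] E => (evalSeries (expQuotSeries ℝ) X).det) A H =
      (evalSeries (expQuotSeries ℝ) A).det *
        traceCLM ℝ E (evalSeries (logDerivSeries ℝ) A * H) := by
  have := FiniteDimensional.complete ℝ E
  have hexp := absSummableAt_expQuotSeries (norm_nonneg A)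
  have hexp' := absSummableAt_derivative_expQuotSeries (norm_nonneg A)
  have hbern := absSummableAt_bernoulliPowerSeries (norm_nonneg A) hA
  let K := evalSeries (bernoulliPowerSeries ℝ) A
  have hinv : evalSeries (expQuotSeries ℝ) A * K = 1 := by
    rw [← hexp.evalSeries_mul hbern, mul_comm, bernoulliPowerSeries_mul_expQuotSeries,
      evalSeries_one]
  have hlog : K * evalSeries (PowerSeries.derivative ℝ (expQuotSeries ℝ)) A =
      evalSeries (logDerivSeries ℝ) A := by
    rw [← hbern.evalSeries_mul hexp', mul_comm, derivative_expQuotSeries_mul_bernoulliPowerSeries]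
  have hdet := (hasFDerivAt_det_of_mul_eq_one hinv).comp A
    (differentiable_evalSeries_expQuotSeries A).hasFDerivAt
  calc fderiv ℝ (fun X : E →L[ℝ] E => (evalSeries (expQuotSeries ℝ) X).det) A H
      = (evalSeries (expQuotSeries ℝ) A).det *
          traceCLM ℝ E (K * fderiv ℝ (evalSeries (expQuotSeries ℝ)) A H) :=
        congrArg (· H) hdet.fderiv
    _ = (evalSeries (expQuotSeries ℝ) A).det *
          traceCLM ℝ E (K * evalSeries (PowerSeries.derivative ℝ (expQuotSeries ℝ)) A * H) := by
        rw [AbsSummableAt.map_mul_fderiv_evalSeries_of_tracial traceCLM_mul_comm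
          (absSummableAt_expQuotSeries (r := ‖A‖ + 1) (by positivity)) (lt_add_one ‖A‖)
          (commute_evalSeries (Commute.refl A) _)]
    _ = _ := by rw [hlog]

end DetExpQuot

section DetExpQuotInner

variable {E : Type*} [NormedAddCommGroup E] [InnerProductSpace ℝ E] [FiniteDimensional ℝ E]
  {A : E →L[ℝ] E}

theorem tsum_even_bernoulli_mul_inner_pow (hA : ‖A‖ < 2 * Real.pi) (u v : E) :
    ∑' k : ℕ, ((bernoulli (2 * (k + 1)) : ℝ) / (2 * (k + 1)).factorial) *
        ⟪u, (A ^ (2 * (k + 1) - 1)) v⟫ =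
      ⟪u, ((2⁻¹ : ℝ) • 1 - evalSeries (logDerivSeries ℝ) (-A)) v⟫ := by
  have := FiniteDimensional.complete ℝ E
  have hlog := hasSum_evalSeries_logDerivSeries ((norm_neg A).trans_lt hA)
  have hsum := hasSum_even_bernoulli_smul_pow hlog
  let φ : (E →L[ℝ] E) →L[ℝ] ℝ := innerSL ℝ u ∘L ContinuousLinearMap.apply ℝ E v
  have hφ (X : E →L[ℝ] E) : φ X = ⟪u, X v⟫ := rfl
  rw [← hφ, ← (hsum.mapL φ).tsum_eq]
  simp only [hφ, smul_apply, real_inner_smul_right]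

theorem fderiv_det_evalSeries_expQuotSeries_neg {ι : Type*} [Fintype ι]
    (e : OrthonormalBasis ι ℝ E) (hA : ‖A‖ < 2 * Real.pi) (H : E →L[ℝ] E) :
    fderiv ℝ (fun X : E →L[ℝ] E => (evalSeries (expQuotSeries ℝ) X).det) (-A) (-H) =
      (evalSeries (expQuotSeries ℝ) (-A)).det *
        (∑ b, ∑ c, ⟪H (e b), e c⟫ *
          ∑' k : ℕ, ((bernoulli (2 * (k + 1)) : ℝ) / (2 * (k + 1)).factorial) *
            ⟪e b, (A ^ (2 * (k + 1) - 1)) (e c)⟫ - LinearMap.trace ℝ E H / 2) := by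
  let G := evalSeries (logDerivSeries ℝ) (-A)
  have hsplit : traceCLM ℝ E (G * -H) =
      traceCLM ℝ E (((2⁻¹ : ℝ) • 1 - G) * H) - LinearMap.trace ℝ E H / 2 := by
    rw [sub_mul, map_sub, smul_mul_assoc, map_smul, one_mul, mul_neg, map_neg, smul_eq_mul,
      traceCLM_apply H]
    ring
  have hsum : traceCLM ℝ E (((2⁻¹ : ℝ) • 1 - G) * H) =
      ∑ b, ∑ c, ⟪H (e b), e c⟫ * ⟪e b, ((2⁻¹ : ℝ) • 1 - G) (e c)⟫ :=
    trace_mul_eq_sum_inner e _ _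
  rw [fderiv_det_evalSeries_expQuotSeries ((norm_neg A).trans_lt hA), hsplit, hsum]
  simp only [tsum_even_bernoulli_mul_inner_pow hA, G]

end DetExpQuotInner

end FormalSeries

theorem jacobian_derivative_general {ι V g : Type*} [Fintype ι] [NormedAddCommGroup V]
    [NormedSpace ℝ V] [NormedAddCommGroup g] [InnerProductSpace ℝ g] [FiniteDimensional ℝ g]
    (ad : V →L[ℝ] g →L[ℝ] g) (e : OrthonormalBasis ι ℝ g)
    (L : V → g →L[ℝ] g)
    (hL : ∀ μ, L μ = ∑' m : ℕ, (((m + 1).factorial : ℝ))⁻¹ • (-ad μ) ^ m)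
    (J : V → ℝ) (hJ : ∀ μ, J μ = LinearMap.det ((L μ).toLinearMap))
    (S : ι → ι → V → ℝ)
    (hS : ∀ b c μ, S b c μ = ∑' k : ℕ,
      (((bernoulli (2 * (k + 1)) : ℚ) : ℝ) / ((2 * (k + 1)).factorial : ℝ)) *
        ⟪e b, (ad μ ^ (2 * (k + 1) - 1)) (e c)⟫) :
    Differentiable ℝ J ∧ ∀ μ : V, ‖ad μ‖ < 2 * Real.pi → ∀ v,
      fderiv ℝ J μ v =
        J μ * (∑ b, ∑ c, ⟪ad v (e b), e c⟫ * S b c μ - LinearMap.trace ℝ g (ad v) / 2) := by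
  let F : (g →L[ℝ] g) → ℝ := fun X => (evalSeries (expQuotSeries ℝ) X).det
  have hF : Differentiable ℝ F := differentiable_det_evalSeries_expQuotSeries
  have hJF : J = F ∘ ⇑(-ad) := by
    ext μ
    rw [hJ, hL, ← evalSeries_expQuotSeries]
    rfl
  refine ⟨hJF ▸ hF.comp (-ad).differentiable, fun μ hμ v => ?_⟩
  have hchain : fderiv ℝ J μ v = fderiv ℝ F (-ad μ) (-ad v) := by
    rw [hJF, fderiv_comp μ (hF _) (-ad).differentiableAt, ContinuousLinearMap.fderiv]
    rfl
  have hJμ : J μ = (evalSeries (expQuotSeries ℝ) (-ad μ)).det := congrFun hJF μ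
  rw [hchain, hJμ, fderiv_det_evalSeries_expQuotSeries_neg e hμ (ad v)]
  simp only [hS]

/-- The Jacobian `J(μ) = det((1 − e^{−ad_μ})/ad_μ)` of the exponential map
is differentiable, and for `‖ad_μ‖ < 2π` its logarithmic derivative in the direction `e_a` is
`∑_{b,c} f_{abc} S_{bc}(μ)`, where `S_{bc}(μ) = ∑_{k≥1} (B_{2k}/(2k)!)⟨e_b, ad_μ^{2k−1} e_c⟩`
(`= −T_{bc}(μ)`): that is, `(DJ)_μ(e_a) = J(μ)·∑_{b,c} f_{abc} S_{bc}(μ)`. -/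
theorem jacobian_derivative
    {n : ℕ} {g : Type*} [NormedAddCommGroup g] [InnerProductSpace ℝ g]
    [FiniteDimensional ℝ g]
    -- the Lie bracket, as a bilinear map
    (br : g →ₗ[ℝ] g →ₗ[ℝ] g)
    (br_alt : ∀ v : g, br v v = 0)
    (br_jacobi : ∀ u v w : g, br u (br v w) = br (br u v) w + br v (br u w))
    -- ad-invariance of the inner product
    (br_inv : ∀ u v w : g, ⟪br u v, w⟫ + ⟪v, br u w⟫ = 0)
    -- an orthonormal basis
    (e : OrthonormalBasis (Fin n) ℝ g)
    -- structure constants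
    (f : Fin n → Fin n → Fin n → ℝ)
    (hf : ∀ a b c, f a b c = ⟪br (e a) (e b), e c⟫)
    -- ad_μ as a continuous linear operator
    (ad : g → g →L[ℝ] g)
    (had : ∀ μ v, ad μ v = br μ v)
    -- the entire function (1 − e^{−ad_μ}) ∘ ad_μ⁻¹ = ∑_{m≥0} (−ad_μ)^m/(m+1)!
    (L : g → g →L[ℝ] g)
    (hL : ∀ μ, L μ = ∑' m : ℕ, (((m + 1).factorial : ℝ))⁻¹ • (-ad μ) ^ m)
    -- the Jacobian of the exponential map
    (J : g → ℝ)
    (hJ : ∀ μ, J μ = LinearMap.det ((L μ).toLinearMap))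
    -- the series S_{bc}(μ) = ∑_{k≥1} (B_{2k}/(2k)!) ⟨e_b, ad_μ^{2k−1} e_c⟩ = −T_{bc}(μ)
    (S : Fin n → Fin n → g → ℝ)
    (hS : ∀ b c μ, S b c μ = ∑' k : ℕ,
      (((bernoulli (2 * (k + 1)) : ℚ) : ℝ) / ((2 * (k + 1)).factorial : ℝ)) *
        ⟪e b, (ad μ ^ (2 * (k + 1) - 1)) (e c)⟫) :
    Differentiable ℝ J ∧
    ∀ μ : g, ‖ad μ‖ < 2 * Real.pi → ∀ a,
      fderiv ℝ J μ (e a) = J μ * ∑ b, ∑ c, f a b c * S b c μ := by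
  have had' : ad = ⇑(LinearMap.toContinuousLinearMap
      (LinearMap.toContinuousLinearMap.toLinearMap ∘ₗ br)) := by
    ext μ v
    exact had μ v
  subst had'
  obtain ⟨hdiff, hderiv⟩ := jacobian_derivative_general _ e L hL J hJ S hS
  refine ⟨hdiff, fun μ hμ a => ?_⟩
  have htrace : LinearMap.trace ℝ g (br (e a)) = 0 := trace_eq_zero_of_skew (br_inv (e a))
  rw [hderiv μ hμ]
  simp [hf, htrace]
end
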